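/- arXiv:1108.0586 — 3 statements merged into one kernel-verified Lean document; each statement's English description precedes it below -/
import Mathlib

section
/- Let K be a field of characteristic not 2 and let A be a (not necessarily associative) K-algebra with bilinear product ab. Then A satisfies a·a = 0 and J(a,b,ac) = J(a,b,c)a for all a,b,c if and only if A satisfies ab + ba = 0 and (ac)(bd) = ((ab)c)d + ((bc)d)a + ((cd)a)b + ((da)b)c for all a,b,c,d. -/
/-!
Let `S(a,b,c,d) = ((ab)c)d + ((bc)d)a + ((cd)a)b + ((da)b)c - (ac)(bd)`, so that Sagle's identity
says `S = 0`. For an alternating product `S` is invariant under cyclic shifts of its arguments, and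
`S(a,a,b,c) = J(a,b,c)a - J(a,b,ac)`, so the Malcev identity says that `S` vanishes when its first
two arguments agree. In that case the transposition of the first two arguments changes the sign
of `S`. Together with the cyclic shift it generates the symmetric group; since a 4-cycle is an odd
permutation, `S = -S`, hence `2S = 0`.
-/

section

variable {R M : Type*} [CommSemiring R] [AddCommGroup M] [Module R M]

/-- The Jacobian `J(a,b,c) = (ab)c + (bc)a + (ca)b` of the product `ab = f a b`. -/
def jacobian (f : M →ₗ[R] M →ₗ[R] M) (a b c : M) : M :=
  f (f a b) c + f (f b c) a + f (f c a) b

/-- The Malcev identity `J(a,b,ac) = J(a,b,c)a` for the product `ab = f a b`. Anticommutativity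
is not included. -/
def MalcevIdentity (f : M →ₗ[R] M →ₗ[R] M) : Prop :=
  ∀ a b c, jacobian f a b (f a c) = f (jacobian f a b c) a

/-- Sagle's identity `(ac)(bd) = ((ab)c)d + ((bc)d)a + ((cd)a)b + ((da)b)c` for the product
`ab = f a b`. Anticommutativity is not included. -/
def SagleIdentity (f : M →ₗ[R] M →ₗ[R] M) : Prop :=
  ∀ a b c d, f (f a c) (f b d)
    = f (f (f a b) c) d + f (f (f b c) d) a + f (f (f c d) a) b + f (f (f d a) b) c

/-- The difference of the two sides of Sagle's identity, as a function of its four arguments. -/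
def sagleDefect (f : M →ₗ[R] M →ₗ[R] M) (a b c d : M) : M :=
  f (f (f a b) c) d + f (f (f b c) d) a + f (f (f c d) a) b + f (f (f d a) b) c
    - f (f a c) (f b d)

theorem isAlt_iff_add_swap_eq_zero {N : Type*} [AddCommGroup N] [Module R N]
    {B : N →ₗ[R] N →ₗ[R] M} (h2 : IsSMulRegular M (2 : R)) :
    B.IsAlt ↔ ∀ x y, B x y + B y x = 0 := by
  refine ⟨fun hB x y => ?_, fun hB x => h2.right_eq_zero_of_smul ?_⟩
  · rw [← hB.neg x y, add_neg_cancel]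
  · rw [two_smul, hB]

variable {f : M →ₗ[R] M →ₗ[R] M}

theorem sagleIdentity_iff_sagleDefect_eq_zero :
    SagleIdentity f ↔ ∀ a b c d, sagleDefect f a b c d = 0 :=
  forall₄_congr fun _ _ _ _ => eq_comm.trans sub_eq_zero.symm

theorem sagleDefect_rotate (hf : f.IsAlt) (a b c d : M) :
    sagleDefect f b c d a = sagleDefect f a b c d := by
  have hprod : f (f b d) (f c a) = f (f a c) (f b d) := by
    rw [← hf.neg a c, map_neg, hf.neg]
  rw [sagleDefect, sagleDefect, hprod]
  abel

theorem sagleDefect_self_left (hf : f.IsAlt) (a b c : M) :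
    sagleDefect f a a b c = f (jacobian f a b c) a - jacobian f a b (f a c) := by
  have hca : f (f (f a c) a) b = -f (f (f c a) a) b := by
    rw [← hf.neg c a, map_neg, LinearMap.neg_apply, map_neg, LinearMap.neg_apply]
  have hbac : f (f b (f a c)) a = f (f (f c a) b) a := by
    rw [← hf.neg (f a c) b, ← hf.neg c a]
    simp only [map_neg, LinearMap.neg_apply, neg_neg]
  simp only [sagleDefect, jacobian, map_add, LinearMap.add_apply, hf.self_eq_zero, map_zero,
    LinearMap.zero_apply, hca, hbac]
  abel

theorem malcevIdentity_iff_sagleDefect_self_left (hf : f.IsAlt) :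
    MalcevIdentity f ↔ ∀ a b c, sagleDefect f a a b c = 0 := by
  refine forall₃_congr fun a b c => ?_
  rw [sagleDefect_self_left hf, sub_eq_zero, eq_comm]

theorem sagleDefect_swap {c d : M} (h : ∀ x, sagleDefect f x x c d = 0) (a b : M) :
    sagleDefect f b a c d = -sagleDefect f a b c d := by
  have expand : sagleDefect f (a + b) (a + b) c d
      = sagleDefect f a a c d + sagleDefect f a b c d
        + (sagleDefect f b a c d + sagleDefect f b b c d) := by
    simp only [sagleDefect, map_add, LinearMap.add_apply]
    abel
  rw [h, h, h, zero_add, add_zero] at expand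
  exact eq_neg_of_add_eq_zero_right expand.symm

theorem SagleIdentity.malcevIdentity (hf : f.IsAlt) (hS : SagleIdentity f) : MalcevIdentity f :=
  (malcevIdentity_iff_sagleDefect_self_left hf).2 fun a b c =>
    sagleIdentity_iff_sagleDefect_eq_zero.1 hS a a b c

theorem MalcevIdentity.sagleDefect_eq_neg_self (hf : f.IsAlt) (hM : MalcevIdentity f)
    (a b c d : M) : sagleDefect f a b c d = -sagleDefect f a b c d := by
  have swap (x y z w : M) : sagleDefect f x y z w = -sagleDefect f y x z w :=
    sagleDefect_swap (fun u => (malcevIdentity_iff_sagleDefect_self_left hf).1 hM u z w) y x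
  -- The 4-cycle as a product of three transpositions, each conjugated by cyclic shifts.
  calc sagleDefect f a b c d
    _ = -sagleDefect f b a c d := swap a b c d
    _ = -sagleDefect f a c d b := by rw [sagleDefect_rotate hf b a c d]
    _ = sagleDefect f c a d b := by rw [swap a c d b, neg_neg]
    _ = sagleDefect f a d b c := (sagleDefect_rotate hf c a d b).symm
    _ = -sagleDefect f d a b c := swap a d b c
    _ = -sagleDefect f a b c d := by rw [sagleDefect_rotate hf d a b c]

theorem MalcevIdentity.sagleIdentity (h2 : IsSMulRegular M (2 : R)) (hf : f.IsAlt)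
    (hM : MalcevIdentity f) : SagleIdentity f := by
  refine sagleIdentity_iff_sagleDefect_eq_zero.2 fun a b c d => h2.right_eq_zero_of_smul ?_
  rw [two_smul, ← eq_neg_iff_add_eq_zero]
  exact hM.sagleDefect_eq_neg_self hf a b c d

variable (f) in
theorem malcev_iff_sagle_general (h2 : IsSMulRegular M (2 : R)) :
    (f.IsAlt ∧ MalcevIdentity f) ↔ ((∀ a b, f a b + f b a = 0) ∧ SagleIdentity f) := by
  rw [← isAlt_iff_add_swap_eq_zero h2]
  exact and_congr_right fun hf =>
    ⟨MalcevIdentity.sagleIdentity h2 hf, SagleIdentity.malcevIdentity hf⟩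

end

/-- For a vector space `A` over a field `K` of characteristic not 2,
with bilinear product `f`, anticommutativity `a·a = 0` together with the Malcev
identity `J(a,b,ac) = J(a,b,c)a` (where `J(a,b,c) = (ab)c + (bc)a + (ca)b`)
hold if and only if `ab + ba = 0` together with Sagle's multilinear identity
`(ac)(bd) = ((ab)c)d + ((bc)d)a + ((cd)a)b + ((da)b)c` hold. -/
theorem malcev_iff_sagle (K : Type) [Field K] (h2 : (2 : K) ≠ 0)
    (A : Type) [AddCommGroup A] [Module K A]
    (f : A →ₗ[K] A →ₗ[K] A) :
    ((∀ a : A, f a a = 0) ∧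
      (∀ a b c : A,
        f (f a b) (f a c) + f (f b (f a c)) a + f (f (f a c) a) b
          = f (f (f a b) c + f (f b c) a + f (f c a) b) a)) ↔
    ((∀ a b : A, f a b + f b a = 0) ∧
      (∀ a b c d : A,
        f (f a c) (f b d)
          = f (f (f a b) c) d + f (f (f b c) d) a + f (f (f c d) a) b
            + f (f (f d a) b) c)) :=
  malcev_iff_sagle_general f (.of_ne_zero h2)
end

section
/- Let D be an alternative dialgebra over a field K. Then the dicommutator ⟨a,b⟩ = a ⊣ b − b ⊢ a satisfies right anticommutativity: ⟨a,⟨b,c⟩⟩ + ⟨a,⟨c,b⟩⟩ = 0 for all a,b,c ∈ D. -/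
/-- The dicommutator `⟨a,b⟩ = a ⊣ b − b ⊢ a`. -/
def dicom {K D : Type} [Field K] [AddCommGroup D] [Module K D]
    (l r : D →ₗ[K] D →ₗ[K] D) (a b : D) : D :=
  l a b - r b a

/-- The left associator `(a,b,c)_⊣ = (a ⊣ b) ⊣ c − a ⊣ (b ⊣ c)`. -/
def lAssoc {K D : Type} [Field K] [AddCommGroup D] [Module K D]
    (l : D →ₗ[K] D →ₗ[K] D) (a b c : D) : D :=
  l (l a b) c - l a (l b c)

/-- The right associator `(a,b,c)_⊢ = (a ⊢ b) ⊢ c − a ⊢ (b ⊢ c)`. -/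
def rAssoc {K D : Type} [Field K] [AddCommGroup D] [Module K D]
    (r : D →ₗ[K] D →ₗ[K] D) (a b c : D) : D :=
  r (r a b) c - r a (r b c)

/-- The inner associator `(a,b,c)_× = (a ⊢ b) ⊣ c − a ⊢ (b ⊣ c)`. -/
def xAssoc {K D : Type} [Field K] [AddCommGroup D] [Module K D]
    (l r : D →ₗ[K] D →ₗ[K] D) (a b c : D) : D :=
  l (r a b) c - r a (l b c)

/-!
The bar identities say that `x = b ⊣ c - b ⊢ c` satisfies `a ⊣ x = 0` and `x ⊢ a = 0`, which are the
two terms of `⟨a, x⟩`. The symmetrization `⟨b, c⟩ + ⟨c, b⟩` is a sum of two such differences.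
-/

/-- A 0-dialgebra: the bilinear products `l` (written `⊣`) and `r` (written `⊢`) satisfy the bar
identities. -/
structure IsZeroDialgebra {R D : Type*} [CommSemiring R] [AddCommGroup D] [Module R D]
    (l r : D →ₗ[R] D →ₗ[R] D) : Prop where
  right_of_left : ∀ a b c : D, r (l a b) c = r (r a b) c
  left_of_right : ∀ a b c : D, l a (l b c) = l a (r b c)

/-- The dicommutator `⟨a, b⟩ = a ⊣ b - b ⊢ a` as a bilinear map, over any commutative semiring of
scalars; over a field it is `dicom`. -/
def dicommutator {R D : Type*} [CommSemiring R] [AddCommGroup D] [Module R D]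
    (l r : D →ₗ[R] D →ₗ[R] D) : D →ₗ[R] D →ₗ[R] D :=
  l - r.flip

theorem dicom_eq_dicommutator {K D : Type} [Field K] [AddCommGroup D] [Module K D]
    (l r : D →ₗ[K] D →ₗ[K] D) (a b : D) : dicom l r a b = dicommutator l r a b :=
  rfl

section

variable {R D : Type*} [CommSemiring R] [AddCommGroup D] [Module R D] {l r : D →ₗ[R] D →ₗ[R] D}

theorem dicommutator_apply (a b : D) : dicommutator l r a b = l a b - r b a :=
  rfl

theorem dicommutator_add_swap (a b : D) :
    dicommutator l r a b + dicommutator l r b a = (l a b - r a b) + (l b a - r b a) := by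
  simp only [dicommutator_apply]
  abel

namespace IsZeroDialgebra

theorem left_sub_eq_zero (h : IsZeroDialgebra l r) (a b c : D) : l a (l b c - r b c) = 0 := by
  rw [map_sub, h.left_of_right, sub_self]

theorem right_sub_eq_zero (h : IsZeroDialgebra l r) (a b c : D) : r (l a b - r a b) c = 0 := by
  rw [map_sub, LinearMap.sub_apply, h.right_of_left, sub_self]

theorem dicommutator_sub_eq_zero (h : IsZeroDialgebra l r) (a b c : D) :
    dicommutator l r a (l b c - r b c) = 0 := by
  rw [dicommutator_apply, h.left_sub_eq_zero, h.right_sub_eq_zero, sub_zero]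

end IsZeroDialgebra

theorem dicommutator_right_anticommutative_general (h : IsZeroDialgebra l r) (a b c : D) :
    dicommutator l r a (dicommutator l r b c) + dicommutator l r a (dicommutator l r c b) = 0 := by
  rw [← map_add, dicommutator_add_swap, map_add, h.dicommutator_sub_eq_zero,
    h.dicommutator_sub_eq_zero, add_zero]

end

/-- In an alternative dialgebra `D` over a field `K`, the
dicommutator `⟨a,b⟩ = a ⊣ b − b ⊢ a` satisfies right anticommutativity:
`⟨a,⟨b,c⟩⟩ + ⟨a,⟨c,b⟩⟩ = 0`. -/
theorem dicommutator_right_anticommutative (K : Type) [Field K]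
    (D : Type) [AddCommGroup D] [Module K D]
    (l r : D →ₗ[K] D →ₗ[K] D)
    (bar1 : ∀ a b c : D, r (l a b) c = r (r a b) c)
    (bar2 : ∀ a b c : D, l a (l b c) = l a (r b c))
    (alt1 : ∀ a b c : D, lAssoc l a b c + rAssoc r c b a = 0)
    (alt2 : ∀ a b c : D, lAssoc l a b c - rAssoc r b c a = 0)
    (alt3 : ∀ a b c : D, xAssoc l r a b c + rAssoc r a c b = 0) :
    ∀ a b c : D,
      dicom l r a (dicom l r b c) + dicom l r a (dicom l r c b) = 0 := by
  simp only [dicom_eq_dicommutator]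
  exact dicommutator_right_anticommutative_general ⟨bar1, bar2⟩
end

section
/- Let K be a field of characteristic not 2 and not 3. Let P be a multilinear polynomial of degree 3 in one formal bilinear operation such that, in every alternative dialgebra over K, P vanishes identically when the formal operation is interpreted as the dicommutator ⟨a,b⟩ = a ⊣ b − b ⊢ a. Then P vanishes identically in every right anticommutative algebra over K; that is, P is a consequence of right anticommutativity. -/
/-- Formal monomials of a single binary operation in variables `x_0, …, x_{n-1}`:
binary trees whose leaves are labelled by variables. -/
inductive BTree (n : ℕ) : Type
  | leaf : Fin n → BTree n
  | node : BTree n → BTree n → BTree n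

namespace BTree

/-- Evaluate a monomial in an algebra with binary operation `m`,
assigning the value `x i` to the variable `i`. -/
def eval {n : ℕ} {V : Type} (m : V → V → V) (x : Fin n → V) : BTree n → V
  | leaf i => x i
  | node s t => m (eval m x s) (eval m x t)

/-- The multiset of variables occurring in a monomial. -/
def vars {n : ℕ} : BTree n → Multiset (Fin n)
  | leaf i => {i}
  | node s t => vars s + vars t

/-- A monomial of degree `n` is multilinear if each of the `n` variables
occurs in it exactly once. -/
def Multilinear {n : ℕ} (t : BTree n) : Prop :=
  vars t = (Finset.univ : Finset (Fin n)).val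

end BTree

/-!
If `A` is an alternative algebra, then `A × A` is an alternative dialgebra whose dicommutator is
`⟨(a, m), (b, n)⟩ = ([a, b], [m, b])`. Evaluating `P` at `(0, a), (b, 0), (c, 0)` kills the second
component of every monomial not beginning with the variable sent to `(0, a)`, and leaves in `A` a
relation `α [[a, b], c] + β [[a, c], b] + γ [a, [b, c]] = 0`. In `2 × 2` matrices it forces
`α = -γ` and `β = γ`, so that it is a multiple of the Jacobi identity; the Jacobian being six times
the associator, an alternative algebra that is not associative then gives `6 γ = 0`. What remains
of `P` is a combination of the `a (b c) + a (c b)`.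
-/

lemma exists_perm_of_map_univ {α : Type*} [Fintype α] {w : α → α}
    (h : Finset.univ.val.map w = Finset.univ.val) : ∃ σ : Equiv.Perm α, σ = w := by
  have hinj : Function.Injective w := fun a b hab ↦
    Multiset.inj_on_of_nodup_map (by rw [h]; exact Finset.univ.nodup) a (Finset.mem_univ a)
      b (Finset.mem_univ b) hab
  exact ⟨.ofBijective w (Finite.injective_iff_bijective.mp hinj), rfl⟩

namespace BTree

variable {n : ℕ}

/-- The left-normed monomial `(x_i x_j) x_k` on the word `w = i j k`. -/
def leftNormed (w : Fin 3 → Fin n) : BTree n := node (node (leaf (w 0)) (leaf (w 1))) (leaf (w 2))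

/-- The right-normed monomial `x_i (x_j x_k)` on the word `w = i j k`. -/
def rightNormed (w : Fin 3 → Fin n) : BTree n := node (leaf (w 0)) (node (leaf (w 1)) (leaf (w 2)))

lemma vars_leftNormed (w : Fin 3 → Fin n) : (leftNormed w).vars = Finset.univ.val.map w := rfl

lemma vars_rightNormed (w : Fin 3 → Fin n) : (rightNormed w).vars = Finset.univ.val.map w := rfl

lemma leftNormed_injective : Function.Injective (leftNormed (n := n)) := by
  intro v w h
  simpa [leftNormed, funext_iff, Fin.forall_fin_succ, and_assoc] using h

lemma rightNormed_injective : Function.Injective (rightNormed (n := n)) := by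
  intro v w h
  simpa [rightNormed, funext_iff, Fin.forall_fin_succ, and_assoc] using h

lemma leftNormed_ne_rightNormed (v w : Fin 3 → Fin n) : leftNormed v ≠ rightNormed w := by
  simp [leftNormed, rightNormed]

lemma card_vars_pos (t : BTree n) : 0 < t.vars.card := by
  cases t with
  | leaf i => exact Nat.one_pos
  | node s t => simpa only [vars, Multiset.card_add] using Nat.add_pos_left s.card_vars_pos _

lemma exists_eq_leaf {t : BTree n} (h : t.vars.card = 1) : ∃ i, t = leaf i := by
  cases t with
  | leaf i => exact ⟨i, rfl⟩
  | node s t =>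
    simp only [vars, Multiset.card_add] at h
    have := s.card_vars_pos
    have := t.card_vars_pos
    omega

lemma exists_eq_node_leaf_leaf {t : BTree n} (h : t.vars.card = 2) :
    ∃ i j, t = node (leaf i) (leaf j) := by
  cases t with
  | leaf i => simp [vars] at h
  | node s t =>
    simp only [vars, Multiset.card_add] at h
    have := s.card_vars_pos
    have := t.card_vars_pos
    obtain ⟨i, rfl⟩ := exists_eq_leaf (t := s) (by omega)
    obtain ⟨j, rfl⟩ := exists_eq_leaf (t := t) (by omega)
    exact ⟨i, j, rfl⟩

lemma exists_eq_leftNormed_or_eq_rightNormed {t : BTree n} (h : t.vars.card = 3) :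
    ∃ w, t = leftNormed w ∨ t = rightNormed w := by
  cases t with
  | leaf i => simp [vars] at h
  | node s t =>
    simp only [vars, Multiset.card_add] at h
    have := s.card_vars_pos
    have := t.card_vars_pos
    obtain hs | hs : s.vars.card = 1 ∨ s.vars.card = 2 := by omega
    · obtain ⟨i, rfl⟩ := exists_eq_leaf hs
      obtain ⟨j, k, rfl⟩ := exists_eq_node_leaf_leaf (t := t) (by omega)
      exact ⟨![i, j, k], Or.inr rfl⟩
    · obtain ⟨i, j, rfl⟩ := exists_eq_node_leaf_leaf hs
      obtain ⟨k, rfl⟩ := exists_eq_leaf (t := t) (by omega)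
      exact ⟨![i, j, k], Or.inl rfl⟩

lemma Multilinear.exists_perm {t : BTree 3} (ht : t.Multilinear) :
    ∃ σ : Equiv.Perm (Fin 3), t = leftNormed σ ∨ t = rightNormed σ := by
  obtain ⟨w, hw⟩ := exists_eq_leftNormed_or_eq_rightNormed
    (t := t) ((congrArg Multiset.card ht).trans (Finset.card_fin 3))
  have hmap : Finset.univ.val.map w = Finset.univ.val := by
    rcases hw with rfl | rfl
    · rwa [← vars_leftNormed]
    · rwa [← vars_rightNormed]
  obtain ⟨σ, rfl⟩ := exists_perm_of_map_univ hmap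
  exact ⟨σ, hw⟩

lemma sum_eq_sum_perm {K M : Type*} [Semiring K] [AddCommMonoid M] [Module K M]
    {P : BTree 3 →₀ K} (hP : ∀ t ∈ P.support, t.Multilinear) (g : BTree 3 → M) :
    P.sum (fun t k ↦ k • g t) = ∑ σ : Equiv.Perm (Fin 3),
      (P (leftNormed σ) • g (leftNormed σ) + P (rightNormed σ) • g (rightNormed σ)) := by
  classical
  let monomial : Equiv.Perm (Fin 3) ⊕ Equiv.Perm (Fin 3) → BTree 3 :=
    Sum.elim (fun σ ↦ leftNormed σ) (fun σ ↦ rightNormed σ)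
  have hinj : Function.Injective monomial :=
    (leftNormed_injective.comp DFunLike.coe_injective).sumElim
      (rightNormed_injective.comp DFunLike.coe_injective) fun _ _ ↦ leftNormed_ne_rightNormed _ _
  have hsupp : P.support ⊆ Finset.univ.image monomial := by
    intro t ht
    obtain ⟨σ, rfl | rfl⟩ := (hP t ht).exists_perm
    · exact Finset.mem_image_of_mem monomial (Finset.mem_univ (Sum.inl σ))
    · exact Finset.mem_image_of_mem monomial (Finset.mem_univ (Sum.inr σ))
  rw [Finsupp.sum_of_support_subset P hsupp _ (by simp),
    Finset.sum_image hinj.injOn, Fintype.sum_sum_type, Finset.sum_add_distrib]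
  rfl

end BTree

open BTree

section Alternative

variable {K A : Type*} [CommRing K] [AddCommGroup A] [Module K A]

/-- The associator `(a, b, c) = (a b) c - a (b c)` of a bilinear product. -/
def bilinAssociator (f : A →ₗ[K] A →ₗ[K] A) (a b c : A) : A := f (f a b) c - f a (f b c)

/-- The commutator `[a, b] = a b - b a` of a bilinear product, again as a bilinear map. -/
def bilinCommutator (f : A →ₗ[K] A →ₗ[K] A) : A →ₗ[K] A →ₗ[K] A := f - f.flip

lemma bilinCommutator_apply (f : A →ₗ[K] A →ₗ[K] A) (a b : A) :
    bilinCommutator f a b = f a b - f b a := rfl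

/-- Alternativity of the algebra given by a bilinear product, without linearization. -/
structure IsAlternative (f : A →ₗ[K] A →ₗ[K] A) : Prop where
  left_alternative : ∀ a b, bilinAssociator f a a b = 0
  right_alternative : ∀ a b, bilinAssociator f b a a = 0

lemma isAlternative_mul (K R : Type*) [CommRing K] [Ring R] [Algebra K R] :
    IsAlternative (LinearMap.mul K R) where
  left_alternative a b := by simp [bilinAssociator, mul_assoc]
  right_alternative a b := by simp [bilinAssociator, mul_assoc]

namespace IsAlternative

variable {f : A →ₗ[K] A →ₗ[K] A}

lemma associator_swap_left (hf : IsAlternative f) (a b c : A) :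
    bilinAssociator f a b c = -bilinAssociator f b a c := by
  have hab := hf.left_alternative (a + b) c
  have ha := hf.left_alternative a c
  have hb := hf.left_alternative b c
  simp only [bilinAssociator, map_add, LinearMap.add_apply] at hab ha hb ⊢
  linear_combination (norm := module) hab - ha - hb

lemma associator_swap_right (hf : IsAlternative f) (a b c : A) :
    bilinAssociator f a b c = -bilinAssociator f a c b := by
  have hbc := hf.right_alternative (b + c) a
  have hb := hf.right_alternative b a
  have hc := hf.right_alternative c a
  simp only [bilinAssociator, map_add, LinearMap.add_apply] at hbc hb hc ⊢
  linear_combination (norm := module) hbc - hb - hc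

lemma associator_rotate (hf : IsAlternative f) (a b c : A) :
    bilinAssociator f a b c = bilinAssociator f b c a := by
  rw [hf.associator_swap_left, hf.associator_swap_right, neg_neg]

lemma associator_reverse (hf : IsAlternative f) (a b c : A) :
    bilinAssociator f a b c = -bilinAssociator f c b a := by
  rw [hf.associator_rotate, hf.associator_swap_left]

lemma jacobian_eq_six_smul_associator (hf : IsAlternative f) (a b c : A) :
    bilinCommutator f (bilinCommutator f a b) c - bilinCommutator f (bilinCommutator f a c) b -
      bilinCommutator f a (bilinCommutator f b c) = (6 : K) • bilinAssociator f a b c := by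
  have hbac := hf.associator_swap_left a b c
  have hacb := hf.associator_swap_right a b c
  have hbca := hf.associator_rotate a b c
  have hcab := hf.associator_rotate c a b
  have hcba := hf.associator_reverse a b c
  simp only [bilinAssociator, bilinCommutator_apply, map_sub, LinearMap.sub_apply]
    at hbac hacb hbca hcab hcba ⊢
  linear_combination (norm := module) -hbac - hacb - hbca + hcab - hcba

end IsAlternative

/-- The axioms of an alternative dialgebra with products `l a b = a ⊣ b` and `r a b = a ⊢ b`. -/
structure IsAlternativeDialgebra (l r : A →ₗ[K] A →ₗ[K] A) : Prop where
  bar_right : ∀ a b c, r (l a b) c = r (r a b) c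
  bar_left : ∀ a b c, l a (l b c) = l a (r b c)
  left_add_right : ∀ a b c, (l (l a b) c - l a (l b c)) + (r (r c b) a - r c (r b a)) = 0
  left_sub_right : ∀ a b c, (l (l a b) c - l a (l b c)) - (r (r b c) a - r b (r c a)) = 0
  inner_add_right : ∀ a b c, (l (r a b) c - r a (l b c)) + (r (r a c) b - r a (r c b)) = 0

/-- The product `(a, m) ⊣ (b, n) = (a b, m b)` on `A × A`, where the second factor is the
regular bimodule. -/
def diLeft (f : A →ₗ[K] A →ₗ[K] A) : A × A →ₗ[K] A × A →ₗ[K] A × A :=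
  LinearMap.mk₂ K (fun p q ↦ (f p.1 q.1, f p.2 q.1))
    (by simp) (by simp) (by simp) (by simp)

/-- The product `(a, m) ⊢ (b, n) = (a b, a n)` on `A × A`, where the second factor is the
regular bimodule. -/
def diRight (f : A →ₗ[K] A →ₗ[K] A) : A × A →ₗ[K] A × A →ₗ[K] A × A :=
  LinearMap.mk₂ K (fun p q ↦ (f p.1 q.1, f p.1 q.2))
    (by simp) (by simp) (by simp) (by simp)

@[simp]
lemma diLeft_apply (f : A →ₗ[K] A →ₗ[K] A) (p q : A × A) :
    diLeft f p q = (f p.1 q.1, f p.2 q.1) := rfl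

@[simp]
lemma diRight_apply (f : A →ₗ[K] A →ₗ[K] A) (p q : A × A) :
    diRight f p q = (f p.1 q.1, f p.1 q.2) := rfl

lemma diLeft_sub_diRight (f : A →ₗ[K] A →ₗ[K] A) (p q : A × A) :
    diLeft f p q - diRight f q p = (bilinCommutator f p.1 q.1, bilinCommutator f p.2 q.1) := rfl

lemma IsAlternative.isAlternativeDialgebra {f : A →ₗ[K] A →ₗ[K] A} (hf : IsAlternative f) :
    IsAlternativeDialgebra (diLeft f) (diRight f) where
  bar_right _ _ _ := rfl
  bar_left _ _ _ := rfl
  left_add_right p q s := by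
    ext
    · exact add_eq_zero_iff_eq_neg.mpr (hf.associator_reverse p.1 q.1 s.1)
    · exact add_eq_zero_iff_eq_neg.mpr (hf.associator_reverse p.2 q.1 s.1)
  left_sub_right p q s := by
    ext
    · exact sub_eq_zero.mpr (hf.associator_rotate p.1 q.1 s.1)
    · exact sub_eq_zero.mpr (hf.associator_rotate p.2 q.1 s.1)
  inner_add_right p q s := by
    ext
    · exact add_eq_zero_iff_eq_neg.mpr (hf.associator_swap_right p.1 q.1 s.1)
    · exact add_eq_zero_iff_eq_neg.mpr (hf.associator_swap_right p.1 q.2 s.1)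

end Alternative

section VolumeProduct

variable (K : Type*) [CommRing K]

open Matrix

/-- The product `(u, v, s) (u', v', s') = (0, u × u', v · u')` on `K³ × K³ × K`, for which
`(a b) c` is the determinant of the `K³`-components and `a (b c) = 0`. It serves as an
alternative algebra that is not associative. -/
def volumeProduct : (Fin 3 → K) × (Fin 3 → K) × K →ₗ[K] (Fin 3 → K) × (Fin 3 → K) × K →ₗ[K]
    (Fin 3 → K) × (Fin 3 → K) × K :=
  LinearMap.mk₂ K (fun p q ↦ (0, p.1 ⨯₃ q.1, p.2.1 ⬝ᵥ q.1))
    (by simp) (by simp) (by simp) (by simp)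

@[simp]
lemma volumeProduct_apply (p q : (Fin 3 → K) × (Fin 3 → K) × K) :
    volumeProduct K p q = (0, p.1 ⨯₃ q.1, p.2.1 ⬝ᵥ q.1) := rfl

lemma isAlternative_volumeProduct : IsAlternative (volumeProduct K) where
  left_alternative p q := by simp [bilinAssociator]
  right_alternative p q := by simp [bilinAssociator, dotProduct_comm, dot_cross_self]

end VolumeProduct

section CommutatorRelation

variable {K : Type} [CommRing K]

/-- The identity `α [[a, b], c] + β [[a, c], b] + γ [a, [b, c]] = 0` holds in all alternative
algebras over `K`. -/
def IsCommutatorRelation (α β γ : K) : Prop :=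
  ∀ (A : Type) [AddCommGroup A] [Module K A] (f : A →ₗ[K] A →ₗ[K] A), IsAlternative f →
    ∀ a b c : A, α • bilinCommutator f (bilinCommutator f a b) c +
      β • bilinCommutator f (bilinCommutator f a c) b +
      γ • bilinCommutator f a (bilinCommutator f b c) = 0

namespace IsCommutatorRelation

variable {α β γ : K}

lemma eq_neg_and_eq (h : IsCommutatorRelation α β γ) : α = -γ ∧ β = γ := by
  let f := LinearMap.mul K (Matrix (Fin 2) (Fin 2) K)
  let a : Matrix (Fin 2) (Fin 2) K := .single 0 0 1
  let e : Matrix (Fin 2) (Fin 2) K := .single 0 1 1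
  have hae : bilinCommutator f a e = e := by simp [bilinCommutator_apply, f, a, e]
  have hea : bilinCommutator f e a = -e := by simp [bilinCommutator_apply, f, a, e]
  have haa : bilinCommutator f a a = 0 := sub_self _
  have eq_of_smul_e {x y : K} (hxy : x • e = y • e) : x = y := by
    simpa [e] using congrFun₂ hxy 0 1
  have haea := h _ f (isAlternative_mul K _) a e a
  have haae := h _ f (isAlternative_mul K _) a a e
  simp only [hae, hea, haa, map_neg, map_zero, LinearMap.zero_apply] at haea haae
  constructor <;> apply eq_of_smul_e
  · linear_combination (norm := module) -haea
  · linear_combination (norm := module) -haae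

lemma six_mul_eq_zero (h : IsCommutatorRelation α β γ) : 6 * γ = 0 := by
  obtain ⟨rfl, rfl⟩ := h.eq_neg_and_eq
  have hjacobian {A : Type} [AddCommGroup A] [Module K A] {f : A →ₗ[K] A →ₗ[K] A}
      (hf : IsAlternative f) (a b c : A) : (6 * β) • bilinAssociator f a b c = 0 := by
    linear_combination (norm := module)
      -h A f hf a b c - β • hf.jacobian_eq_six_smul_associator a b c
  simpa [bilinAssociator, cross_apply] using congrArg (fun p ↦ p.2.2) <|
    hjacobian (isAlternative_volumeProduct K)
      (![1, 0, 0], 0, 0) (![0, 1, 0], 0, 0) (![0, 0, 1], 0, 0)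

lemma eq_zero (h : IsCommutatorRelation α β γ) (h6 : (6 : K) ∈ nonZeroDivisors K) :
    α = 0 ∧ β = 0 ∧ γ = 0 := by
  obtain ⟨hα, hβ⟩ := h.eq_neg_and_eq
  have hγ : γ = 0 := (mul_left_mem_nonZeroDivisors_eq_zero_iff h6).mp h.six_mul_eq_zero
  exact ⟨by rw [hα, hγ, neg_zero], hβ.trans hγ, hγ⟩

end IsCommutatorRelation

end CommutatorRelation

/-- `P` vanishes in every alternative dialgebra over `K` when the operation is interpreted as the
dicommutator. -/
def IsDicommutatorIdentity {K : Type} [CommRing K] (P : BTree 3 →₀ K) : Prop :=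
  ∀ (D : Type) [AddCommGroup D] [Module K D] (l r : D →ₗ[K] D →ₗ[K] D),
    IsAlternativeDialgebra l r →
    ∀ x : Fin 3 → D, P.sum (fun t k ↦ k • t.eval (fun a b ↦ l a b - r b a) x) = 0

section DicommutatorIdentity

variable {K : Type} [CommRing K] {P : BTree 3 →₀ K}

lemma IsDicommutatorIdentity.sum_commutator_eq_zero (hP : IsDicommutatorIdentity P)
    (hml : ∀ t ∈ P.support, t.Multilinear) {A : Type} [AddCommGroup A] [Module K A]
    {f : A →ₗ[K] A →ₗ[K] A} (hf : IsAlternative f) (a m : Fin 3 → A) :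
    ∑ σ : Equiv.Perm (Fin 3),
      (P (leftNormed σ) • bilinCommutator f (bilinCommutator f (m (σ 0)) (a (σ 1))) (a (σ 2)) +
        P (rightNormed σ) • bilinCommutator f (m (σ 0)) (bilinCommutator f (a (σ 1)) (a (σ 2)))) =
      0 := by
  have h := hP (A × A) _ _ hf.isAlternativeDialgebra fun i ↦ (a i, m i)
  rw [sum_eq_sum_perm hml] at h
  simpa only [leftNormed, rightNormed, BTree.eval, diLeft_sub_diRight, Prod.snd_sum, Prod.snd_add,
    Prod.smul_snd, Prod.snd_zero] using congrArg Prod.snd h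

lemma eq_one_or_eq_swap_of_apply_zero :
    ∀ σ : Equiv.Perm (Fin 3), σ 0 = 0 → σ = 1 ∨ σ = Equiv.swap 1 2 := by
  decide

lemma IsDicommutatorIdentity.isCommutatorRelation (hP : IsDicommutatorIdentity P)
    (hml : ∀ t ∈ P.support, t.Multilinear) (σ : Equiv.Perm (Fin 3)) :
    IsCommutatorRelation (P (leftNormed σ)) (P (leftNormed (σ ∘ Equiv.swap 1 2)))
      (P (rightNormed σ) - P (rightNormed (σ ∘ Equiv.swap 1 2))) := by
  intro A _ _ f hf a b c
  have h := hP.sum_commutator_eq_zero hml hf (![0, b, c] ∘ σ.symm) (![a, 0, 0] ∘ σ.symm)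
  rw [← Equiv.sum_comp (Equiv.mulLeft σ), Fintype.sum_eq_add 1 (Equiv.swap 1 2) (by decide)] at h
  · have hswap : Equiv.swap (1 : Fin 3) 2 0 = 0 := rfl
    have hskew : bilinCommutator f c b = -bilinCommutator f b c := (neg_sub _ _).symm
    simp only [Equiv.coe_mulLeft, mul_one, Equiv.Perm.coe_mul, Function.comp_apply,
      Equiv.symm_apply_apply, Equiv.swap_apply_left, Equiv.swap_apply_right, hswap,
      Matrix.cons_val, hskew, map_neg] at h
    linear_combination (norm := module) h
  · rintro ρ ⟨hρ, hρ'⟩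
    have hρ0 : ρ 0 ≠ 0 := fun h0 ↦ (eq_one_or_eq_swap_of_apply_zero ρ h0).elim hρ hρ'
    have hvanish : ![a, 0, 0] (ρ 0) = 0 := by
      obtain ⟨i, hi⟩ := Fin.exists_succ_eq.mpr hρ0
      rw [← hi]
      fin_cases i <;> rfl
    simp [hvanish]

theorem degree3_dicommutator_identities_general (h6 : (6 : K) ∈ nonZeroDivisors K)
    (hml : ∀ t ∈ P.support, t.Multilinear) (hP : IsDicommutatorIdentity P)
    {A : Type} [AddCommGroup A] [Module K A] (f : A →ₗ[K] A →ₗ[K] A)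
    (hf : ∀ a b c, f a (f b c) + f a (f c b) = 0) (x : Fin 3 → A) :
    P.sum (fun t k ↦ k • t.eval (fun a b ↦ f a b) x) = 0 := by
  have hleft (σ : Equiv.Perm (Fin 3)) : P (leftNormed σ) = 0 :=
    ((hP.isCommutatorRelation hml σ).eq_zero h6).1
  have hright (σ : Equiv.Perm (Fin 3)) :
      P (rightNormed σ) = P (rightNormed (σ ∘ Equiv.swap 1 2)) :=
    sub_eq_zero.mp ((hP.isCommutatorRelation hml σ).eq_zero h6).2.2
  simp only [sum_eq_sum_perm hml, hleft, zero_smul, zero_add]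
  refine Finset.sum_involution (fun σ _ ↦ σ * Equiv.swap 1 2) (fun σ _ ↦ ?_)
    (fun σ _ _ h ↦ absurd (mul_eq_left.mp h) (by decide)) (fun _ _ ↦ Finset.mem_univ _)
    (fun σ _ ↦ Equiv.mul_swap_mul_self 1 2 σ)
  rw [Equiv.Perm.coe_mul, ← hright, ← smul_add]
  simp [rightNormed, BTree.eval, Equiv.swap_apply_of_ne_of_ne, hf]

end DicommutatorIdentity

/-- Over a field `K` of characteristic not 2 and not 3, every
multilinear polynomial identity `P` of degree 3 (in one formal bilinear
operation) satisfied by the dicommutator `⟨a,b⟩ = a ⊣ b − b ⊢ a` in every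
alternative dialgebra over `K` is satisfied in every right anticommutative
algebra over `K`; that is, `P` is a consequence of right anticommutativity. -/
theorem degree3_dicommutator_identities (K : Type) [Field K]
    (h2 : (2 : K) ≠ 0) (h3 : (3 : K) ≠ 0)
    (P : BTree 3 →₀ K) (hml : ∀ t ∈ P.support, t.Multilinear)
    (hvanish : ∀ (D : Type) [AddCommGroup D] [Module K D]
      (l r : D →ₗ[K] D →ₗ[K] D),
      (∀ a b c : D, r (l a b) c = r (r a b) c) →
      (∀ a b c : D, l a (l b c) = l a (r b c)) →
      (∀ a b c : D, (l (l a b) c - l a (l b c)) + (r (r c b) a - r c (r b a)) = 0) →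
      (∀ a b c : D, (l (l a b) c - l a (l b c)) - (r (r b c) a - r b (r c a)) = 0) →
      (∀ a b c : D, (l (r a b) c - r a (l b c)) + (r (r a c) b - r a (r c b)) = 0) →
      ∀ x : Fin 3 → D,
        P.sum (fun t k => k • BTree.eval (fun a b => l a b - r b a) x t) = 0) :
    ∀ (A : Type) [AddCommGroup A] [Module K A] (f : A →ₗ[K] A →ₗ[K] A),
      (∀ a b c : A, f a (f b c) + f a (f c b) = 0) →
      ∀ x : Fin 3 → A,
        P.sum (fun t k => k • BTree.eval (fun a b => f a b) x t) = 0 := by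
  have h6 : (6 : K) ≠ 0 := by simpa [show (6 : K) = 2 * 3 by norm_num] using ⟨h2, h3⟩
  exact fun A _ _ ↦ degree3_dicommutator_identities_general (mem_nonZeroDivisors_of_ne_zero h6) hml
    fun D _ _ l r ⟨h₁, h₂, h₃, h₄, h₅⟩ ↦ hvanish D l r h₁ h₂ h₃ h₄ h₅
end
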